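/- For every n ≥ 3 and 1 ≤ k < n/2, every bond of the generalized Petersen graph P(n, k) has size at most n + 2, and the set of bond sizes of P(n,k) is exactly {3, 4, ..., n + 2}. -/

import Mathlib

open SimpleGraph

/-- An edge-cut of `G`: a set of edges of `G` whose deletion disconnects `G`. -/
def IsEdgeCut {V : Type*} (G : SimpleGraph V) (S : Set (Sym2 V)) : Prop :=
  S ⊆ G.edgeSet ∧ ¬ (G.deleteEdges S).Connected

/-- A bond: a minimal nonempty edge-cut. -/
def IsBond {V : Type*} (G : SimpleGraph V) (S : Set (Sym2 V)) : Prop :=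
  S.Nonempty ∧ IsEdgeCut G S ∧ ∀ T ⊂ S, T.Nonempty → ¬ IsEdgeCut G T

/-- A largest bond: a bond of maximum size. -/
def IsLargestBond {V : Type*} (G : SimpleGraph V) (S : Set (Sym2 V)) : Prop :=
  IsBond G S ∧ ∀ T, IsBond G T → T.ncard ≤ S.ncard

/-- The set of edges of `G` between `X` and its complement. -/
def crossEdges {V : Type*} (G : SimpleGraph V) (X : Set V) : Set (Sym2 V) :=
  {e ∈ G.edgeSet | ∃ x ∈ X, ∃ y ∈ Xᶜ, e = s(x, y)}

/-- `G` is 2-connected: at least 3 vertices and connected after deleting any ≤ 1 vertices. -/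
def TwoConnected {V : Type*} (G : SimpleGraph V) : Prop :=
  3 ≤ Nat.card V ∧ ∀ s : Set V, s.ncard ≤ 1 → (G.induce sᶜ).Connected

/-- `G` is 3-connected: at least 4 vertices and connected after deleting any ≤ 2 vertices. -/
def ThreeConnected {V : Type*} (G : SimpleGraph V) : Prop :=
  4 ≤ Nat.card V ∧ ∀ s : Set V, s.ncard ≤ 2 → (G.induce sᶜ).Connected

/-- A longest cycle of `G`. -/
def IsLongestCycle {V : Type*} (G : SimpleGraph V) {v : V} (C : G.Walk v v) : Prop :=
  C.IsCycle ∧ ∀ (u : V) (D : G.Walk u u), D.IsCycle → D.length ≤ C.length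

/-- The generalized Petersen graph `P(n, k)`: outer vertices `Sum.inl i` ("xᵢ") and
inner vertices `Sum.inr i` ("yᵢ"), with edges `xᵢxᵢ₊₁`, `xᵢyᵢ`, `yᵢyᵢ₊ₖ` (indices mod n). -/
def GPetersen (n k : ℕ) : SimpleGraph (ZMod n ⊕ ZMod n) :=
  SimpleGraph.fromRel (fun a b =>
    (∃ i : ZMod n, a = Sum.inl i ∧ b = Sum.inl (i + 1)) ∨
    (∃ i : ZMod n, a = Sum.inl i ∧ b = Sum.inr i) ∨
    (∃ i : ZMod n, a = Sum.inr i ∧ b = Sum.inr (i + (k : ZMod n))))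

/-!
In an `r`-regular graph, attaching a leaf to an induced tree raises the size of its edge boundary by
`r - 2`. So in a cubic graph on `2n` vertices, an induced tree on `n` vertices with connected
complement yields bonds of sizes `3, …, n + 2`: prune its leaves one at a time, the complement
staying connected. In `P(n, k)` with `d = gcd(n, k)`, such a tree is the path `x_0 … x_{n-d-1}` with
the pendant leaves `y_0, …, y_{d-1}`, one on each of the `d` inner cycles; the complement is the
rest of the rim together with the `d` inner paths left over, each joined to it by a spoke.

No bond is larger, since the graph stays connected after all but one edge of a bond are deleted.
None is smaller than three: a cut meeting the rim or an inner cycle does so at least twice, so the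
only candidates lie within the rim, within the spokes or within the inner cycles. The first two
kinds are invariant under translation by `k`, whose orbits have at least three elements, and the
third is empty.
-/

section Cuts

variable {V : Type*} {G : SimpleGraph V} {X Y : Set V}

theorem mk_mem_crossEdges {a b : V} :
    s(a, b) ∈ crossEdges G X ↔ G.Adj a b ∧ ¬(a ∈ X ↔ b ∈ X) := by
  simp only [crossEdges, Set.mem_ofPred_eq, mem_edgeSet, Set.mem_compl_iff, Sym2.eq_iff]
  grind

theorem crossEdges_subset_edgeSet : crossEdges G X ⊆ G.edgeSet := fun _ he => he.1

theorem crossEdges_symmDiff :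
    crossEdges G (symmDiff X Y) = symmDiff (crossEdges G X) (crossEdges G Y) := by
  ext ⟨a, b⟩
  simp only [Set.mem_symmDiff, mk_mem_crossEdges]
  tauto

theorem crossEdges_singleton {v : V} : crossEdges G {v} = G.incidenceSet v := by
  ext ⟨a, b⟩
  simp only [mk_mem_crossEdges, mk'_mem_incidenceSet_iff, Set.mem_singleton_iff]
  grind [G.ne_of_adj]

theorem ncard_crossEdges_singleton {v : V} :
    (crossEdges G {v}).ncard = (G.neighborSet v).ncard := by
  classical
  rw [crossEdges_singleton]
  exact Nat.card_congr (G.incidenceSetEquivNeighborSet v)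

theorem crossEdges_inter_crossEdges_singleton {v : V} (hv : v ∉ X) :
    crossEdges G X ∩ crossEdges G {v} = (s(v, ·)) '' (G.neighborSet v ∩ X) := by
  ext ⟨a, b⟩
  simp only [Set.mem_inter_iff, mk_mem_crossEdges, Set.mem_singleton_iff, Set.mem_image,
    mem_neighborSet, Sym2.eq_iff]
  grind [G.adj_comm]

theorem ncard_crossEdges_insert [Finite V] {v : V} (hv : v ∉ X) :
    (crossEdges G (insert v X)).ncard + 2 * (G.neighborSet v ∩ X).ncard =
      (crossEdges G X).ncard + (G.neighborSet v).ncard := by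
  have hinsert : insert v X = symmDiff X {v} := by
    ext a
    simp only [Set.mem_insert_iff, Set.mem_symmDiff, Set.mem_singleton_iff]
    grind
  have hinter : (crossEdges G X ∩ crossEdges G {v}).ncard = (G.neighborSet v ∩ X).ncard := by
    rw [crossEdges_inter_crossEdges_singleton hv]
    exact Set.ncard_image_of_injective _ fun _ _ => Sym2.congr_right.1
  rw [hinsert, crossEdges_symmDiff, Set.symmDiff_def, Set.ncard_union_eq disjoint_sdiff_sdiff,
    ← hinter, ← ncard_crossEdges_singleton]
  have hX := Set.ncard_inter_add_ncard_sdiff_eq_ncard (crossEdges G X) (crossEdges G {v})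
  have hv := Set.ncard_inter_add_ncard_sdiff_eq_ncard (crossEdges G {v}) (crossEdges G X)
  rw [Set.inter_comm] at hv
  omega

theorem IsEdgeCut.exists_crossEdges_subset [Nonempty V] {B : Set (Sym2 V)} (hB : IsEdgeCut G B) :
    ∃ X : Set V, X.Nonempty ∧ Xᶜ.Nonempty ∧ crossEdges G X ⊆ B := by
  obtain ⟨u, v, huv⟩ : ∃ u v, ¬(G.deleteEdges B).Reachable u v := by
    by_contra! h
    exact hB.2 ⟨h⟩
  refine ⟨{w | (G.deleteEdges B).Reachable u w}, ⟨u, .refl _⟩, ⟨v, huv⟩, ?_⟩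
  rintro ⟨a, b⟩ hab
  rw [mk_mem_crossEdges] at hab
  by_contra hB
  have hadj : (G.deleteEdges B).Adj a b := deleteEdges_adj.2 ⟨hab.1, hB⟩
  exact hab.2 ⟨fun h => h.trans hadj.reachable, fun h => h.trans hadj.symm.reachable⟩

theorem not_connected_deleteEdges_crossEdges (hX : X.Nonempty) (hXc : Xᶜ.Nonempty) :
    ¬(G.deleteEdges (crossEdges G X)).Connected := by
  intro hconn
  obtain ⟨u, hu⟩ := hX
  obtain ⟨v, hv⟩ := hXc
  obtain ⟨p⟩ := hconn.preconnected u v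
  obtain ⟨e, -, he, he'⟩ := p.exists_boundary_dart X hu hv
  have hadj := deleteEdges_adj.1 e.adj
  exact hadj.2 (mk_mem_crossEdges.2 ⟨hadj.1, by tauto⟩)

theorem connected_of_induce_of_induce_compl (hX : (G.induce X).Connected)
    (hXc : (G.induce Xᶜ).Connected) (hne : (crossEdges G X).Nonempty) : G.Connected := by
  obtain ⟨_, hadj, a, ha, b, hb, rfl⟩ := hne
  have huniv := connected_induce_union hX.preconnected hXc.preconnected ha hb hadj
  rw [Set.union_compl_self] at huniv
  exact (induceUnivIso G).connected_iff.1 huniv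

theorem isBond_crossEdges (hX : (G.induce X).Connected) (hXc : (G.induce Xᶜ).Connected)
    (hne : (crossEdges G X).Nonempty) : IsBond G (crossEdges G X) := by
  refine ⟨hne, ⟨crossEdges_subset_edgeSet, not_connected_deleteEdges_crossEdges
    (Set.nonempty_coe_sort.1 hX.nonempty) (Set.nonempty_coe_sort.1 hXc.nonempty)⟩, ?_⟩
  rintro T hT - ⟨-, hdisconn⟩
  obtain ⟨⟨a, b⟩, hab, habT⟩ := Set.exists_of_ssubset hT
  rw [mk_mem_crossEdges] at hab
  -- `G` and `G.deleteEdges T` agree on each side, and `ab` still joins the two sides.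
  have hle {Z : Set V} (hZ : ∀ x ∈ Z, ∀ y ∈ Z, s(x, y) ∉ crossEdges G X) :
      G.induce Z ≤ (G.deleteEdges T).induce Z := fun x y hxy =>
    deleteEdges_adj.2 ⟨hxy, fun h => hZ x x.2 y y.2 (hT.subset h)⟩
  refine hdisconn (connected_of_induce_of_induce_compl (X := X)
    (hX.mono <| hle fun x hx y hy => ?_) (hXc.mono <| hle fun x hx y hy => ?_)
    ⟨s(a, b), mk_mem_crossEdges.2 ⟨deleteEdges_adj.2 ⟨hab.1, habT⟩, hab.2⟩⟩)
  all_goals simp_all [mk_mem_crossEdges]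

theorem IsBond.connected_deleteEdges (hG : G.Connected) {B T : Set (Sym2 V)} (hB : IsBond G B)
    (hT : T ⊂ B) : (G.deleteEdges T).Connected := by
  rcases T.eq_empty_or_nonempty with rfl | hne
  · rwa [deleteEdges_empty]
  · by_contra h
    exact hB.2.2 T hT hne ⟨hT.subset.trans hB.2.1.1, h⟩

theorem IsBond.ncard_add_card_le [Finite V] (hG : G.Connected) {B : Set (Sym2 V)}
    (hB : IsBond G B) : B.ncard + Nat.card V ≤ G.edgeSet.ncard + 2 := by
  obtain ⟨e, he⟩ := hB.1
  have hBe : B \ {e} ⊂ B := Set.sdiff_singleton_ssubset.2 he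
  have hspan := (hB.connected_deleteEdges hG hBe).card_vert_le_card_edgeSet_add_one
  rw [Nat.card_coe_set_eq, edgeSet_deleteEdges,
    Set.ncard_sdiff (hBe.subset.trans hB.2.1.1)] at hspan
  have hle := Set.ncard_le_ncard hB.2.1.1
  have hpos : 0 < B.ncard := (Set.ncard_pos).2 hB.1
  have hcard := Set.ncard_sdiff_singleton_of_mem he
  omega

theorem two_mul_ncard_edgeSet [Finite V] {r : ℕ} (hG : ∀ v, (G.neighborSet v).ncard = r) :
    2 * G.edgeSet.ncard = r * Nat.card V := by
  classical
  have := Fintype.ofFinite V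
  have hdeg (v : V) : G.degree v = r := by
    rw [← hG v, ← card_neighborSet_eq_degree, Set.ncard_eq_toFinset_card', Set.toFinset_card]
  rw [← coe_edgeFinset, Set.ncard_coe_finset, ← sum_degrees_eq_twice_card_edges,
    Nat.card_eq_fintype_card]
  simp [hdeg, mul_comm]

end Cuts

section InducedTrees

/-- `X` induces a finite tree in `G`, presented by the order in which its vertices are attached
as leaves, starting from a single vertex. -/
inductive IsInducedTree {V : Type*} (G : SimpleGraph V) : Set V → Prop
  | singleton (v : V) : IsInducedTree G {v}
  | insert_leaf {X : Set V} {u v : V} (hX : IsInducedTree G X) (hv : v ∉ X)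
      (hu : G.neighborSet v ∩ X = {u}) : IsInducedTree G (insert v X)

variable {V : Type*} {G : SimpleGraph V} {X : Set V}

theorem connected_induce_insert {u v : V} (hX : (G.induce X).Connected) (hu : u ∈ X)
    (huv : G.Adj v u) : (G.induce (insert v X)).Connected :=
  connected_induce_union (s := {v}) (connected_top.mono (by simp)).preconnected hX.preconnected
    (Set.mem_singleton v) hu huv

theorem IsInducedTree.connected_induce (hX : IsInducedTree G X) : (G.induce X).Connected := by
  induction hX with
  | singleton v => simp
  | @insert_leaf X u v _ _ hu ih =>
    have huX : u ∈ G.neighborSet v ∩ X := hu.superset rfl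
    exact connected_induce_insert ih huX.2 huX.1

theorem IsInducedTree.ncard_crossEdges [Finite V] {d : ℕ}
    (hG : ∀ v, (G.neighborSet v).ncard = d + 2) (hX : IsInducedTree G X) :
    (crossEdges G X).ncard = d * X.ncard + 2 := by
  induction hX with
  | singleton v => rw [ncard_crossEdges_singleton, hG, Set.ncard_singleton, mul_one]
  | insert_leaf _ hv hu ih =>
    have hcut := ncard_crossEdges_insert (G := G) hv
    rw [hu, Set.ncard_singleton, ih, hG] at hcut
    rw [Set.ncard_insert_of_notMem hv, mul_add]
    omega

theorem IsInducedTree.exists_isBond_ncard_eq [Finite V] {d : ℕ}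
    (hG : ∀ v, (G.neighborSet v).ncard = d + 2) (hX : IsInducedTree G X)
    (hXc : (G.induce Xᶜ).Connected) {m : ℕ} (hm : 1 ≤ m) (hmX : m ≤ X.ncard) :
    ∃ B, IsBond G B ∧ B.ncard = d * m + 2 := by
  have hbond {Y : Set V} (hY : IsInducedTree G Y) (hYc : (G.induce Yᶜ).Connected) :
      IsBond G (crossEdges G Y) := by
    refine isBond_crossEdges hY.connected_induce hYc ((Set.ncard_pos).1 ?_)
    rw [hY.ncard_crossEdges hG]
    omega
  induction hX with
  | singleton v =>
    rw [Set.ncard_singleton] at hmX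
    obtain rfl : m = 1 := by omega
    exact ⟨_, hbond (.singleton v) hXc, by
      rw [(IsInducedTree.singleton v).ncard_crossEdges hG, Set.ncard_singleton]⟩
  | @insert_leaf X u v hX hv hu ih =>
    rcases hmX.eq_or_lt with rfl | hlt
    · exact ⟨_, hbond (hX.insert_leaf hv hu) hXc, (hX.insert_leaf hv hu).ncard_crossEdges hG⟩
    · rw [Set.ncard_insert_of_notMem hv] at hlt
      refine ih ?_ (by omega)
      -- Of the at least two neighbours of the leaf `v`, only one lies in `X`.
      obtain ⟨w, hw, hwu⟩ := Set.exists_ne_of_one_lt_ncard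
        (show 1 < (G.neighborSet v).ncard by rw [hG]; omega) u
      have hwX : w ∉ X := fun h => hwu (hu.subset ⟨hw, h⟩)
      have hcompl : Xᶜ = insert v (insert v X)ᶜ := by
        ext a
        simp only [Set.mem_compl_iff, Set.mem_insert_iff]
        grind
      rw [hcompl]
      exact connected_induce_insert hXc (by simp [hwX, hw.ne']) hw

end InducedTrees

section Shifts

/-- The indices `a` of the steps `a ↦ a + c` that cross the boundary of `S`. For `A = ℤ/n` these
index the edges cut by `S` in a union of cycles `a, a + c, a + 2c, …`. -/
def shiftBoundary {A : Type*} [Add A] (S : Set A) (c : A) : Set A := {a | ¬(a ∈ S ↔ a + c ∈ S)}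

theorem mem_iff_add_mem_of_shiftBoundary_eq_empty {A : Type*} [Add A] {S : Set A} {c : A}
    (h : shiftBoundary S c = ∅) (a : A) :
    a ∈ S ↔ a + c ∈ S :=
  not_not.1 (Set.eq_empty_iff_forall_notMem.1 h a)

theorem add_mem_shiftBoundary {A : Type*} [AddCommSemigroup A] {S : Set A} {a c d : A}
    (hS : shiftBoundary S d = ∅) (ha : a ∈ shiftBoundary S c) : a + d ∈ shiftBoundary S c := by
  have hinv := mem_iff_add_mem_of_shiftBoundary_eq_empty hS
  rwa [shiftBoundary, Set.mem_ofPred_eq, add_right_comm, ← hinv, ← hinv]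

variable {A : Type*} [AddGroup A] {S : Set A} {c : A}

theorem exists_mem_add_notMem [Finite A] (h : (shiftBoundary S c).Nonempty) :
    ∃ a ∈ S, a + c ∉ S := by
  obtain ⟨a, ha⟩ := h
  by_contra! hS
  have himage : (· + c) '' S = S := Set.eq_of_subset_of_ncard_le (Set.image_subset_iff.2 hS)
    (Set.ncard_image_of_injective S (add_left_injective c)).ge
  exact ha (by rw [← (add_left_injective c).mem_set_image (s := S), himage])

-- The steps leaving `S` and the steps entering `S` both occur as soon as one of them does.
theorem two_le_ncard_shiftBoundary [Finite A] (h : (shiftBoundary S c).Nonempty) :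
    2 ≤ (shiftBoundary S c).ncard := by
  have hcompl : shiftBoundary Sᶜ c = shiftBoundary S c := by
    ext a
    exact not_congr not_iff_not
  obtain ⟨a, ha, hac⟩ := exists_mem_add_notMem h
  obtain ⟨b, hb, hbc⟩ := exists_mem_add_notMem (hcompl ▸ h)
  refine (Set.one_lt_ncard_iff).2 ⟨a, b, fun h => hac (h.1 ha), ?_, ?_⟩
  · exact fun h => hb (h.2 (Set.notMem_compl_iff.1 hbc))
  · rintro rfl
    exact hb ha

theorem three_le_ncard_of_add_mem [Finite A] (hc : c + c ≠ 0) (hne : S.Nonempty)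
    (hS : ∀ a ∈ S, a + c ∈ S) : 3 ≤ S.ncard := by
  obtain ⟨a, ha⟩ := hne
  have hc0 : c ≠ 0 := fun h => hc (by simp [h])
  exact (Set.two_lt_ncard_iff).2 ⟨a, a + c, a + c + c, ha, hS a ha, hS _ (hS a ha), by simpa,
    by simpa [add_assoc], by simpa⟩

theorem sym2_mk_add_injective (hc : c + c ≠ 0) : Function.Injective fun a => s(a, a + c) := by
  intro a b hab
  rcases Sym2.eq_iff.1 hab with h | ⟨h, h'⟩
  · exact h.1
  · rw [h, add_assoc, add_eq_left] at h'
    exact absurd h' hc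

end Shifts

section ResidueClasses

variable {n : ℕ} [NeZero n]

theorem val_lt_succ_iff {a : ℕ} (ha : a < n) {i : ZMod n} :
    i.val < a + 1 ↔ i = a ∨ i.val < a := by
  rw [Nat.lt_succ_iff_lt_or_eq, or_comm, ← (ZMod.val_injective n).eq_iff,
    ZMod.val_natCast_of_lt ha]

theorem ncard_setOf_val_lt {a : ℕ} (ha : a ≤ n) : {i : ZMod n | i.val < a}.ncard = a := by
  induction a with
  | zero => simp
  | succ a ih =>
    have hinsert : {i : ZMod n | i.val < a + 1} = insert (a : ZMod n) {i | i.val < a} :=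
      Set.ext fun i => val_lt_succ_iff (by omega)
    rw [hinsert, Set.ncard_insert_of_notMem, ih (by omega)]
    simp [ZMod.val_natCast_of_lt (show a < n by omega)]

theorem sub_mem_zmultiples_natCast_iff {k : ℕ} {i j : ZMod n} :
    i - j ∈ AddSubgroup.zmultiples (k : ZMod n) ↔ i.val ≡ j.val [MOD n.gcd k] := by
  rw [AddSubgroup.mem_zmultiples_iff]
  constructor
  · rintro ⟨z, hz⟩
    have hreduce := congrArg (ZMod.castHom (n.gcd_dvd_left k) (ZMod (n.gcd k))) hz
    have hk : (k : ZMod (n.gcd k)) = 0 := (ZMod.natCast_eq_zero_iff _ _).2 (n.gcd_dvd_right k)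
    rw [map_zsmul, map_natCast, hk, smul_zero, map_sub, eq_comm, sub_eq_zero] at hreduce
    rw [← ZMod.natCast_zmod_val i, ← ZMod.natCast_zmod_val j, map_natCast, map_natCast] at hreduce
    exact (ZMod.natCast_eq_natCast_iff _ _ _).1 hreduce
  · intro h
    obtain ⟨t, ht⟩ := Nat.modEq_iff_dvd.1 h.symm
    have hbezout := congrArg (Int.cast : ℤ → ZMod n) (Nat.gcd_eq_gcd_ab n k)
    have hsub := congrArg (Int.cast : ℤ → ZMod n) ht
    push_cast at hbezout hsub
    simp only [ZMod.natCast_val, ZMod.cast_id', id_eq, CharP.cast_eq_zero, zero_mul, zero_add]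
      at hbezout hsub
    refine ⟨n.gcdB k * t, ?_⟩
    rw [zsmul_eq_mul, hsub, hbezout]
    push_cast
    ring

theorem eq_of_sub_mem_zmultiples {k : ℕ} {i j : ZMod n}
    (h : i - j ∈ AddSubgroup.zmultiples (k : ZMod n)) (hi : i.val < n.gcd k)
    (hj : j.val < n.gcd k) : i = j :=
  ZMod.val_injective n ((sub_mem_zmultiples_natCast_iff.1 h).eq_of_lt_of_lt hi hj)

end ResidueClasses

section Adjacency

theorem one_add_one_ne_zero_of_two_mul_ne_zero {R : Type*} [NonAssocSemiring R] {a : R}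
    (ha : 2 * a ≠ 0) : (1 + 1 : R) ≠ 0 := by
  rw [one_add_one_eq_two]
  exact left_ne_zero_of_mul ha

variable {n k : ℕ} {i j : ZMod n}

theorem GPetersen.adj_inl_inl (hk : (2 * k : ZMod n) ≠ 0) :
    (GPetersen n k).Adj (.inl i) (.inl j) ↔ j = i + 1 ∨ i = j + 1 := by
  have : Nontrivial (ZMod n) := ⟨_, _, hk⟩
  simp only [GPetersen, fromRel_adj]
  grind [one_ne_zero (α := ZMod n)]

theorem GPetersen.adj_inl_inr : (GPetersen n k).Adj (.inl i) (.inr j) ↔ i = j := by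
  simp [GPetersen, eq_comm]

theorem GPetersen.adj_inr_inr (hk : (2 * k : ZMod n) ≠ 0) :
    (GPetersen n k).Adj (.inr i) (.inr j) ↔ j = i + k ∨ i = j + k := by
  have := right_ne_zero_of_mul hk
  simp only [GPetersen, fromRel_adj]
  grind

theorem GPetersen.neighborSet_inl (hk : (2 * k : ZMod n) ≠ 0) (i : ZMod n) :
    (GPetersen n k).neighborSet (.inl i) = {.inl (i + 1), .inl (i - 1), .inr i} := by
  ext (j | j)
  · simp [adj_inl_inl hk, eq_sub_iff_add_eq, eq_comm]
  · simp [adj_inl_inr, eq_comm]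

theorem GPetersen.neighborSet_inr (hk : (2 * k : ZMod n) ≠ 0) (i : ZMod n) :
    (GPetersen n k).neighborSet (.inr i) = {.inr (i + k), .inr (i - k), .inl i} := by
  ext (j | j)
  · simp [adj_comm, adj_inl_inr]
  · simp [adj_inr_inr hk, eq_sub_iff_add_eq, eq_comm]

theorem GPetersen.ncard_neighborSet (hk : (2 * k : ZMod n) ≠ 0) (v : ZMod n ⊕ ZMod n) :
    ((GPetersen n k).neighborSet v).ncard = 3 := by
  have hne {i c : ZMod n} (hc : c + c ≠ 0) : i + c ≠ i - c := fun h =>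
    hc (by linear_combination h)
  rcases v with i | i
  · rw [neighborSet_inl hk]
    exact Set.ncard_eq_three.2 ⟨_, _, _,
      by simpa using hne (one_add_one_ne_zero_of_two_mul_ne_zero hk), by simp, by simp, rfl⟩
  · rw [neighborSet_inr hk]
    exact Set.ncard_eq_three.2 ⟨_, _, _, by simpa using hne (two_mul (k : ZMod n) ▸ hk), by simp,
      by simp, rfl⟩

end Adjacency

section LowerBound

variable {n k : ℕ} [NeZero n]

theorem eq_empty_or_eq_univ_of_shiftBoundary_one_eq_empty {S : Set (ZMod n)}
    (hS : shiftBoundary S 1 = ∅) : S = ∅ ∨ S = Set.univ := by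
  have hnat (m : ℕ) : (0 : ZMod n) ∈ S ↔ (m : ZMod n) ∈ S := by
    induction m with
    | zero => rw [Nat.cast_zero]
    | succ m ih => rw [Nat.cast_succ, ← mem_iff_add_mem_of_shiftBoundary_eq_empty hS, ih]
  have hconst (i : ZMod n) : (0 : ZMod n) ∈ S ↔ i ∈ S := by
    rw [hnat i.val, ZMod.natCast_zmod_val]
  by_cases h0 : (0 : ZMod n) ∈ S
  · exact .inr (Set.eq_univ_of_forall fun i => (hconst i).1 h0)
  · exact .inl (Set.eq_empty_of_forall_notMem fun i hi => h0 ((hconst i).2 hi))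

theorem three_le_ncard_shiftBoundary_add_ncard_symmDiff (hk : (2 * k : ZMod n) ≠ 0)
    {S T : Set (ZMod n)} (hempty : ¬(S = ∅ ∧ T = ∅)) (huniv : ¬(S = Set.univ ∧ T = Set.univ)) :
    3 ≤ (shiftBoundary S 1).ncard + (symmDiff S T).ncard +
      (shiftBoundary T (k : ZMod n)).ncard := by
  have hkk : (k + k : ZMod n) ≠ 0 := two_mul (k : ZMod n) ▸ hk
  rcases (symmDiff S T).eq_empty_or_nonempty with hST | hST
  · obtain rfl : S = T := symmDiff_eq_bot.1 hST
    have hrim : (shiftBoundary S 1).Nonempty := by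
      by_contra! h
      have := eq_empty_or_eq_univ_of_shiftBoundary_one_eq_empty h
      tauto
    have hrim2 := two_le_ncard_shiftBoundary hrim
    rcases (shiftBoundary S (k : ZMod n)).eq_empty_or_nonempty with hinner | hinner
    · have := three_le_ncard_of_add_mem hkk hrim fun _ => add_mem_shiftBoundary hinner
      omega
    · have := two_le_ncard_shiftBoundary hinner
      omega
  · have hspoke : 0 < (symmDiff S T).ncard := (Set.ncard_pos).2 hST
    rcases (shiftBoundary S 1).eq_empty_or_nonempty with hrim | hrim
    · rcases (shiftBoundary T (k : ZMod n)).eq_empty_or_nonempty with hinner | hinner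
      · have hS (i j : ZMod n) : i ∈ S ↔ j ∈ S := by
          rcases eq_empty_or_eq_univ_of_shiftBoundary_one_eq_empty hrim with rfl | rfl <;> simp
        have hT := mem_iff_add_mem_of_shiftBoundary_eq_empty hinner
        have := three_le_ncard_of_add_mem hkk hST fun i hi => by
          rwa [Set.mem_symmDiff, ← hT, hS _ i]
        omega
      · have := two_le_ncard_shiftBoundary hinner
        omega
    · have := two_le_ncard_shiftBoundary hrim
      omega

theorem GPetersen.ncard_shiftBoundary_add_le_ncard_crossEdges (hk : (2 * k : ZMod n) ≠ 0)
    (X : Set (ZMod n ⊕ ZMod n)) :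
    (shiftBoundary (Sum.inl ⁻¹' X) 1).ncard + (symmDiff (Sum.inl ⁻¹' X) (Sum.inr ⁻¹' X)).ncard +
        (shiftBoundary (Sum.inr ⁻¹' X) (k : ZMod n)).ncard ≤
      (crossEdges (GPetersen n k) X).ncard := by
  have hrim : Function.Injective fun i : ZMod n => s(Sum.inl (β := ZMod n) i, .inl (i + 1)) :=
    (Sym2.map.injective Sum.inl_injective).comp
      (sym2_mk_add_injective (one_add_one_ne_zero_of_two_mul_ne_zero hk))
  have hspoke : Function.Injective fun i : ZMod n => s(Sum.inl i, Sum.inr i) := fun i j h => by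
    simpa using h
  have hinner : Function.Injective fun i : ZMod n => s(Sum.inr (α := ZMod n) i, .inr (i + k)) :=
    (Sym2.map.injective Sum.inr_injective).comp
      (sym2_mk_add_injective (two_mul (k : ZMod n) ▸ hk))
  rw [← Set.ncard_image_of_injective _ hrim, ← Set.ncard_image_of_injective _ hspoke,
    ← Set.ncard_image_of_injective _ hinner, ← Set.ncard_union_eq, ← Set.ncard_union_eq]
  · refine Set.ncard_le_ncard ?_
    rintro _ ((⟨i, hi, rfl⟩ | ⟨i, hi, rfl⟩) | ⟨i, hi, rfl⟩) <;> rw [mk_mem_crossEdges]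
    · exact ⟨(adj_inl_inl hk).2 (.inl rfl), hi⟩
    · refine ⟨adj_inl_inr.2 rfl, ?_⟩
      simp only [Set.mem_symmDiff, Set.mem_preimage] at hi
      tauto
    · exact ⟨(adj_inr_inr hk).2 (.inl rfl), hi⟩
  all_goals simp [Set.disjoint_left, or_imp, forall_and]

theorem GPetersen.three_le_ncard_of_isEdgeCut (hk : (2 * k : ZMod n) ≠ 0)
    {B : Set (Sym2 (ZMod n ⊕ ZMod n))} (hB : IsEdgeCut (GPetersen n k) B) : 3 ≤ B.ncard := by
  obtain ⟨X, ⟨x, hx⟩, ⟨y, hy⟩, hXB⟩ := hB.exists_crossEdges_subset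
  have hX : ¬(Sum.inl ⁻¹' X = ∅ ∧ Sum.inr ⁻¹' X = ∅) := by
    rintro ⟨hl, hr⟩
    rcases x with i | i
    · exact Set.eq_empty_iff_forall_notMem.1 hl i hx
    · exact Set.eq_empty_iff_forall_notMem.1 hr i hx
  have hXc : ¬(Sum.inl ⁻¹' X = Set.univ ∧ Sum.inr ⁻¹' X = Set.univ) := by
    rintro ⟨hl, hr⟩
    rcases y with i | i
    · exact hy (Set.eq_univ_iff_forall.1 hl i)
    · exact hy (Set.eq_univ_iff_forall.1 hr i)
  calc
    3 ≤ _ := three_le_ncard_shiftBoundary_add_ncard_symmDiff hk hX hXc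
    _ ≤ (crossEdges (GPetersen n k) X).ncard := ncard_shiftBoundary_add_le_ncard_crossEdges hk X
    _ ≤ B.ncard := Set.ncard_le_ncard hXB

end LowerBound

section Caterpillar

/-- The vertices `x_0, …, x_{a-1}` and `y_0, …, y_{b-1}` of a generalized Petersen graph. For
`a = n - gcd n k` and `b = gcd n k` they induce a path with pendant leaves, one leaf taken from each
inner cycle, and half of the vertices lie in this tree. -/
def caterpillar (n a b : ℕ) : Set (ZMod n ⊕ ZMod n) :=
  {v | v.elim (·.val < a) (·.val < b)}

theorem inl_mem_caterpillar {n a b : ℕ} {i : ZMod n} :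
    .inl i ∈ caterpillar n a b ↔ i.val < a := Iff.rfl

theorem inr_mem_caterpillar {n a b : ℕ} {i : ZMod n} :
    .inr i ∈ caterpillar n a b ↔ i.val < b := Iff.rfl

theorem caterpillar_zero_zero {n : ℕ} : caterpillar n 0 0 = ∅ := by
  ext (i | i) <;> simp [caterpillar]

variable {n k : ℕ} [NeZero n]

theorem two_mul_gcd_le (hk : (2 * k : ZMod n) ≠ 0) : 2 * n.gcd k ≤ n := by
  obtain ⟨q, hq⟩ := n.gcd_dvd_left k
  have hq0 : q ≠ 0 := by
    rintro rfl
    exact NeZero.ne n (by simpa using hq)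
  have hq1 : q ≠ 1 := by
    rintro rfl
    have hnk : n ∣ k := Nat.gcd_eq_left_iff_dvd.1 (by simpa using hq.symm)
    exact right_ne_zero_of_mul hk ((ZMod.natCast_eq_zero_iff _ _).2 hnk)
  calc
    2 * n.gcd k ≤ q * n.gcd k := Nat.mul_le_mul_right _ (by omega)
    _ = n := by rw [mul_comm, ← hq]

theorem caterpillar_succ_left {a b : ℕ} (ha : a < n) :
    caterpillar n (a + 1) b = insert (.inl (a : ZMod n)) (caterpillar n a b) := by
  ext (i | i) <;> simp [inl_mem_caterpillar, inr_mem_caterpillar, val_lt_succ_iff ha]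

theorem caterpillar_succ_right {a b : ℕ} (hb : b < n) :
    caterpillar n a (b + 1) = insert (.inr (b : ZMod n)) (caterpillar n a b) := by
  ext (i | i) <;> simp [inl_mem_caterpillar, inr_mem_caterpillar, val_lt_succ_iff hb]

theorem ncard_caterpillar {a b : ℕ} (ha : a ≤ n) (hb : b ≤ n) :
    (caterpillar n a b).ncard = a + b := by
  have hunion : caterpillar n a b = Sum.inl '' {i | i.val < a} ∪ Sum.inr '' {i | i.val < b} := by
    ext (i | i) <;> simp [caterpillar]
  rw [hunion, Set.ncard_union_eq (by simp [Set.disjoint_left]),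
    Set.ncard_image_of_injective _ Sum.inl_injective,
    Set.ncard_image_of_injective _ Sum.inr_injective, ncard_setOf_val_lt ha, ncard_setOf_val_lt hb]

theorem GPetersen.isInducedTree_caterpillar_zero (hk : (2 * k : ZMod n) ≠ 0) {a : ℕ}
    (ha : a + 1 < n) : IsInducedTree (GPetersen n k) (caterpillar n (a + 1) 0) := by
  induction a with
  | zero =>
    rw [caterpillar_succ_left (by omega), caterpillar_zero_zero, insert_empty_eq]
    exact .singleton _
  | succ a ih =>
    have hval {m : ℕ} (hm : m < n) : (m : ZMod n).val = m := ZMod.val_natCast_of_lt hm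
    rw [caterpillar_succ_left (by omega)]
    refine (ih (by omega)).insert_leaf (u := .inl a) ?_ ?_
    · rw [inl_mem_caterpillar, hval (by omega)]
      omega
    · have hnext : (.inl ((a + 1 : ℕ) + 1 : ZMod n)) ∉ caterpillar n (a + 1) 0 := by
        rw [inl_mem_caterpillar, ← Nat.cast_succ, hval ha]
        omega
      have hprev : .inl (a : ZMod n) ∈ caterpillar n (a + 1) 0 := by
        rw [inl_mem_caterpillar, hval (by omega)]
        omega
      rw [neighborSet_inl hk, Set.insert_inter_of_notMem hnext, Nat.cast_succ, add_sub_cancel_right,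
        Set.insert_inter_of_mem hprev, Set.singleton_inter_eq_empty.2 (by simp [caterpillar]),
        insert_empty_eq]

theorem GPetersen.isInducedTree_caterpillar (hk : (2 * k : ZMod n) ≠ 0) {b : ℕ}
    (hb : b ≤ n.gcd k) :
    IsInducedTree (GPetersen n k) (caterpillar n (n - n.gcd k) b) := by
  have hgcd := two_mul_gcd_le hk
  have hpos : 0 < n.gcd k := Nat.gcd_pos_of_pos_left k (NeZero.pos n)
  induction b with
  | zero =>
    obtain ⟨a, ha⟩ := Nat.exists_eq_add_one.2 (show 0 < n - n.gcd k by omega)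
    exact ha ▸ isInducedTree_caterpillar_zero hk (by omega)
  | succ b ih =>
    have hval : (b : ZMod n).val = b := ZMod.val_natCast_of_lt (by omega)
    have hmem : .inl (b : ZMod n) ∈ caterpillar n (n - n.gcd k) b := by
      rw [inl_mem_caterpillar, hval]
      omega
    -- `y_b` is the only one of `y_0, …, y_b` in its coset of `⟨k⟩`.
    have hcoset {i : ZMod n} (hi : i - b ∈ AddSubgroup.zmultiples (k : ZMod n)) :
        .inr i ∉ caterpillar n (n - n.gcd k) b := fun h => by
      rw [inr_mem_caterpillar] at h
      rw [eq_of_sub_mem_zmultiples hi (by omega) (by omega)] at h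
      omega
    rw [caterpillar_succ_right (by omega)]
    refine (ih (by omega)).insert_leaf (u := .inl b) (hcoset (by simp)) ?_
    rw [neighborSet_inr hk, Set.insert_inter_of_notMem (hcoset (by simp)),
      Set.insert_inter_of_notMem (hcoset (by simp)),
      Set.inter_eq_left.2 (Set.singleton_subset_iff.2 hmem)]

theorem connected_induce_image_Icc {V : Type*} {G : SimpleGraph V} {f : ℕ → V} {a b : ℕ}
    (hab : a ≤ b) (hf : ∀ i, a ≤ i → i < b → G.Adj (f i) (f (i + 1))) :
    (G.induce (f '' Set.Icc a b)).Connected := by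
  induction b, hab using Nat.le_induction with
  | base =>
    rw [Set.Icc_self, Set.image_singleton]
    simp
  | succ b hab ih =>
    rw [← Set.insert_Icc_right_eq_Icc_add_one (by omega), Set.image_insert_eq]
    exact connected_induce_insert (ih fun i hai hib => hf i hai (by omega))
      (Set.mem_image_of_mem f (Set.right_mem_Icc.2 hab)) (hf b hab (by omega)).symm

theorem GPetersen.connected_induce_inl_le_val (hk : (2 * k : ZMod n) ≠ 0) {a : ℕ} (ha : a < n) :
    ((GPetersen n k).induce (Sum.inl '' {i | a ≤ i.val})).Connected := by
  have himage : Sum.inl '' {i : ZMod n | a ≤ i.val} =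
      (fun m : ℕ => (.inl m : ZMod n ⊕ ZMod n)) '' Set.Icc a (n - 1) := by
    rw [← Set.image_image Sum.inl (Nat.cast : ℕ → ZMod n)]
    congr 1
    ext i
    constructor
    · exact fun hi => ⟨i.val, ⟨hi, Nat.le_sub_one_of_lt i.val_lt⟩, ZMod.natCast_zmod_val i⟩
    · rintro ⟨m, ⟨hma, hmn⟩, rfl⟩
      rwa [Set.mem_ofPred_eq, ZMod.val_natCast_of_lt (by omega)]
  rw [himage]
  exact connected_induce_image_Icc (by omega) fun i _ _ =>
    (adj_inl_inl hk).2 (.inl (Nat.cast_succ i))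

theorem GPetersen.connected_induce_inr_coset_sdiff (hk : (2 * k : ZMod n) ≠ 0) (r : ZMod n) :
    ((GPetersen n k).induce
      (Sum.inr '' {i | i - r ∈ AddSubgroup.zmultiples (k : ZMod n) ∧ i ≠ r})).Connected := by
  have horder : 1 < addOrderOf (k : ZMod n) := by
    have hpos := addOrderOf_pos (k : ZMod n)
    have hne : addOrderOf (k : ZMod n) ≠ 1 := AddMonoid.addOrderOf_eq_one_iff.not.2
      (right_ne_zero_of_mul hk)
    omega
  have himage : Sum.inr '' {i | i - r ∈ AddSubgroup.zmultiples (k : ZMod n) ∧ i ≠ r} =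
      (fun j : ℕ => (.inr (r + j • (k : ZMod n)) : ZMod n ⊕ ZMod n)) ''
        Set.Icc 1 (addOrderOf (k : ZMod n) - 1) := by
    rw [← Set.image_image Sum.inr (fun j : ℕ => r + j • (k : ZMod n))]
    congr 1
    ext i
    constructor
    · rintro ⟨hi, hir⟩
      obtain ⟨j, hj, hji⟩ := Finset.mem_image.1 (mem_zmultiples_iff_mem_range_addOrderOf.1 hi)
      have hj0 : j ≠ 0 := by
        rintro rfl
        exact hir (sub_eq_zero.1 (by simpa using hji.symm))
      rw [Finset.mem_range] at hj
      exact ⟨j, ⟨by omega, by omega⟩, by simp [hji]⟩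
    · rintro ⟨j, ⟨hj1, hj⟩, rfl⟩
      refine ⟨⟨j, by simp⟩, fun h => ?_⟩
      have hdvd := addOrderOf_dvd_of_nsmul_eq_zero (add_eq_left.1 h)
      exact absurd (Nat.le_of_dvd (by omega) hdvd) (by omega)
  rw [himage]
  exact connected_induce_image_Icc (by omega) fun j _ _ =>
    (adj_inr_inr hk).2 (.inl (by rw [succ_nsmul, add_assoc]))

theorem GPetersen.connected_induce_inl_union_inr_coset (hk : (2 * k : ZMod n) ≠ 0) {r : ZMod n}
    (hr : r.val < n.gcd k) :
    ((GPetersen n k).induce (Sum.inl '' {i | n - n.gcd k ≤ i.val} ∪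
      Sum.inr '' {i | i - r ∈ AddSubgroup.zmultiples (k : ZMod n) ∧ i ≠ r})).Connected := by
  have hgcd := two_mul_gcd_le hk
  obtain ⟨t, ht⟩ : ∃ t : ZMod n, t.val = n - n.gcd k + r.val :=
    ⟨_, ZMod.val_natCast_of_lt (by omega)⟩
  have htr : t ≠ r := fun h => by
    rw [h] at ht
    omega
  have hmod : t.val ≡ r.val [MOD n.gcd k] := by
    have hdvd : n.gcd k ∣ n - n.gcd k := Nat.dvd_sub (n.gcd_dvd_left k) dvd_rfl
    simpa [ht] using (Nat.modEq_zero_iff_dvd.2 hdvd).add_right r.val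
  exact connected_induce_union
    (connected_induce_inl_le_val hk (a := n - n.gcd k) (by omega)).preconnected
    (connected_induce_inr_coset_sdiff hk r).preconnected
    (Set.mem_image_of_mem _ (ht.ge.trans' (Nat.le_add_right _ _)))
    (Set.mem_image_of_mem _ ⟨sub_mem_zmultiples_natCast_iff.2 hmod, htr⟩) (adj_inl_inr.2 rfl)

theorem GPetersen.connected_induce_compl_caterpillar (hk : (2 * k : ZMod n) ≠ 0) :
    ((GPetersen n k).induce (caterpillar n (n - n.gcd k) (n.gcd k))ᶜ).Connected := by
  have hgcd := two_mul_gcd_le hk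
  have hpos : 0 < n.gcd k := Nat.gcd_pos_of_pos_left k (NeZero.pos n)
  have hrim : Sum.inl '' {i : ZMod n | n - n.gcd k ≤ i.val} ⊆
      (caterpillar n (n - n.gcd k) (n.gcd k))ᶜ := by
    rintro _ ⟨i, hi, rfl⟩
    exact Nat.not_lt.2 hi
  obtain ⟨u, hu⟩ : ∃ u : ZMod n, n - n.gcd k ≤ u.val :=
    ⟨_, (ZMod.val_natCast_of_lt (show n - 1 < n by omega)).ge.trans' (by omega)⟩
  refine induce_connected_of_patches (.inl u) (hrim ⟨u, hu, rfl⟩) ?_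
  rintro (i | i) hi
  · exact ⟨_, hrim, ⟨u, hu, rfl⟩, ⟨i, Nat.not_lt.1 hi, rfl⟩,
      (connected_induce_inl_le_val hk (by omega)).preconnected _ _⟩
  · obtain ⟨r, hr⟩ : ∃ r : ZMod n, r.val = i.val % n.gcd k :=
      ⟨_, ZMod.val_natCast_of_lt ((Nat.mod_lt _ hpos).trans_le (Nat.gcd_le_left k (NeZero.pos n)))⟩
    have hrlt : r.val < n.gcd k := hr ▸ Nat.mod_lt _ hpos
    have hir : i - r ∈ AddSubgroup.zmultiples (k : ZMod n) :=
      sub_mem_zmultiples_natCast_iff.2 (hr ▸ (Nat.mod_modEq _ _).symm)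
    have hne : i ≠ r := by
      rintro rfl
      exact hi hrlt
    have hcoset : Sum.inr '' {j | j - r ∈ AddSubgroup.zmultiples (k : ZMod n) ∧ j ≠ r} ⊆
        (caterpillar n (n - n.gcd k) (n.gcd k))ᶜ := by
      rintro _ ⟨j, ⟨hj, hjr⟩, rfl⟩ hmem
      exact hjr (eq_of_sub_mem_zmultiples hj hmem hrlt)
    exact ⟨_, Set.union_subset hrim hcoset, .inl ⟨u, hu, rfl⟩, .inr ⟨i, ⟨hir, hne⟩, rfl⟩,
      (connected_induce_inl_union_inr_coset hk hrlt).preconnected _ _⟩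

end Caterpillar

section Bonds

variable {n k : ℕ} [NeZero n]

theorem GPetersen.connected (hk : (2 * k : ZMod n) ≠ 0) : (GPetersen n k).Connected := by
  have htree := isInducedTree_caterpillar hk le_rfl
  refine connected_of_induce_of_induce_compl htree.connected_induce
    (connected_induce_compl_caterpillar hk) ((Set.ncard_pos).1 ?_)
  rw [htree.ncard_crossEdges (ncard_neighborSet hk)]
  omega

theorem GPetersen.ncard_le_of_isBond (hk : (2 * k : ZMod n) ≠ 0)
    {B : Set (Sym2 (ZMod n ⊕ ZMod n))} (hB : IsBond (GPetersen n k) B) : B.ncard ≤ n + 2 := by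
  have hbond := hB.ncard_add_card_le (connected hk)
  have hedges := two_mul_ncard_edgeSet (ncard_neighborSet hk)
  rw [Nat.card_sum, Nat.card_zmod] at hbond hedges
  omega

theorem GPetersen.exists_isBond_ncard_eq (hk : (2 * k : ZMod n) ≠ 0) {s : ℕ} (hs : 3 ≤ s)
    (hsn : s ≤ n + 2) : ∃ B, IsBond (GPetersen n k) B ∧ B.ncard = s := by
  have hcard : (caterpillar n (n - n.gcd k) (n.gcd k)).ncard = n := by
    have hgcd := two_mul_gcd_le hk
    rw [ncard_caterpillar (by omega) (by omega)]
    omega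
  obtain ⟨B, hB, hBs⟩ := (isInducedTree_caterpillar hk le_rfl).exists_isBond_ncard_eq
    (ncard_neighborSet hk) (connected_induce_compl_caterpillar hk)
    (show 1 ≤ s - 2 by omega) (by omega)
  exact ⟨B, hB, by omega⟩

end Bonds

theorem gPetersen_cospectrum_eq_general (n k : ℕ) [NeZero n] (hnk : ¬n ∣ 2 * k) :
    (∀ B : Set (Sym2 (ZMod n ⊕ ZMod n)), IsBond (GPetersen n k) B → B.ncard ≤ n + 2) ∧
    {s : ℕ | ∃ B : Set (Sym2 (ZMod n ⊕ ZMod n)), IsBond (GPetersen n k) B ∧ B.ncard = s}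
      = {s : ℕ | 3 ≤ s ∧ s ≤ n + 2} := by
  have hk : (2 * k : ZMod n) ≠ 0 := by
    rwa [← ZMod.natCast_eq_zero_iff, Nat.cast_mul, Nat.cast_ofNat] at hnk
  refine ⟨fun B => GPetersen.ncard_le_of_isBond hk, Set.Subset.antisymm ?_ ?_⟩
  · rintro _ ⟨B, hB, rfl⟩
    exact ⟨GPetersen.three_le_ncard_of_isEdgeCut hk hB.2.1, GPetersen.ncard_le_of_isBond hk hB⟩
  · exact fun s hs => GPetersen.exists_isBond_ncard_eq hk hs.1 hs.2

/-- every bond of `P(n,k)` has size at most `n + 2`, and the set of bond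
sizes is exactly `{3, 4, …, n + 2}`. -/
theorem gPetersen_cospectrum_eq (n k : ℕ) (hn : 3 ≤ n) (hk1 : 1 ≤ k) (hk2 : 2 * k < n) :
    (∀ B : Set (Sym2 (ZMod n ⊕ ZMod n)), IsBond (GPetersen n k) B → B.ncard ≤ n + 2) ∧
    {s : ℕ | ∃ B : Set (Sym2 (ZMod n ⊕ ZMod n)), IsBond (GPetersen n k) B ∧ B.ncard = s}
      = {s : ℕ | 3 ≤ s ∧ s ≤ n + 2} := by
  have : NeZero n := ⟨by omega⟩
  exact gPetersen_cospectrum_eq_general n k (Nat.not_dvd_of_pos_of_lt (by omega) hk2)
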